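/- Let R be a local ring with finitely generated regular maximal ideal M that is the radical of a principal ideal. If S is a ring with R ⊆ S ⊆ T(M) and S is integral over R, then S is a semilocal ring and every maximal ideal of S is a finitely generated ideal. -/

import Mathlib

/-!
The proof follows the classical Krull–Akizuki argument. Write `M = √(a)`. A power of a regular
element of `M` is a multiple of `a`, so `a` is regular, and every element of `T(M)`, hence of `S`,
is carried into `R` by a power of `a`.

* Every prime of `R ⧸ (a ^ k)` is the image of `M`, which is finitely generated and maximal. By
  Cohen's theorem `R ⧸ (a ^ k)` is Noetherian, and then Artinian, having dimension zero
  (`isArtinianRing_quotient`).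
* The descending chain of images of `a ^ k S ∩ R` in the Artinian ring `R ⧸ (a)` stabilizes, which
  yields an `n` with `a ^ n S ⊆ R + a ^ (n + 1) S` (`exists_pow_mul_eq`).
* Multiplication by `a ^ n` therefore embeds the `R`-module `S ⧸ a S` into the image of
  `R ⧸ (a ^ (n + 1))` in `S ⧸ a ^ (n + 1) S`. Hence `S ⧸ a S` is an Artinian `R`-module, and so an Artinian
  ring (`isArtinianRing_quotient_algebraMap`).

As `S` is integral over `R`, each maximal ideal of `S` lies over `M` and so contains `a`. The
maximal ideals of `S` are thus those of the Artinian ring `S ⧸ a S`: there are finitely many of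
them, and each is finitely generated modulo the principal ideal `a S`.
-/

set_option synthInstance.maxHeartbeats 400000
set_option maxHeartbeats 800000

open scoped nonZeroDivisors

/-- A semilocal ring: a commutative ring with only finitely many maximal ideals. -/
def IsSemilocalRing (R : Type*) [CommRing R] : Prop := {I : Ideal R | I.IsMaximal}.Finite

/-- The Nagata transform `T(I) = ⋃_{k>0} (R :_{Q(R)} I^k)` of an ideal `I`, as a subalgebra
of the total quotient ring of `R`.  (The union is already a subring containing `R`, so
taking `Algebra.adjoin` of it does not change the underlying set.) -/
def nagataTransform (R : Type*) [CommRing R] (I : Ideal R) :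
    Subalgebra R (Localization R⁰) :=
  Algebra.adjoin R (⋃ k : ℕ,
    ((1 / IsLocalization.coeSubmodule (Localization R⁰) (I ^ (k + 1)) :
      Submodule R (Localization R⁰)) : Set (Localization R⁰)))

/-- A local ring with finitely generated maximal ideal `√(a)` is Artinian modulo each ideal
`(a ^ k)`: the only possible prime of the quotient is the image of the maximal ideal. -/
lemma isArtinianRing_quotient {R : Type*} [CommRing R] [IsLocalRing R]
    (hfg : (IsLocalRing.maximalIdeal R).FG) (a : R)
    (ha : IsLocalRing.maximalIdeal R = (Ideal.span {a}).radical) (k : ℕ) :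
    IsArtinianRing (R ⧸ Ideal.span {a ^ k}) := by
  have key : ∀ P : Ideal (R ⧸ Ideal.span {a ^ k}), P.IsPrime →
      P.comap (Ideal.Quotient.mk _) = IsLocalRing.maximalIdeal R := by
    intro P hP
    have hP' : (P.comap (Ideal.Quotient.mk (Ideal.span {a ^ k}))).IsPrime := inferInstance
    apply le_antisymm (IsLocalRing.le_maximalIdeal hP'.ne_top)
    rw [ha, hP'.isRadical.radical_le_iff, Ideal.span_singleton_le_iff_mem]
    apply hP'.mem_of_pow_mem k
    rw [Ideal.mem_comap, Ideal.Quotient.eq_zero_iff_mem.mpr (Ideal.mem_span_singleton_self _)]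
    exact P.zero_mem
  have hsurj : Function.Surjective (Ideal.Quotient.mk (Ideal.span {a ^ k})) :=
    Ideal.Quotient.mk_surjective
  rw [isArtinianRing_iff_isNoetherianRing_krullDimLE_zero]
  constructor
  · apply IsNoetherianRing.of_prime
    intro P hP
    rw [← Ideal.map_comap_of_surjective _ hsurj P, key P hP]
    exact hfg.map _
  · rw [Ring.krullDimLE_zero_iff]
    intro P hP
    have : (P.comap (Ideal.Quotient.mk (Ideal.span {a ^ k}))).IsMaximal := by
      rw [key P hP]; infer_instance
    have h := Ideal.map_eq_top_or_isMaximal_of_surjective _ hsurj this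
    rw [Ideal.map_comap_of_surjective _ hsurj P] at h
    exact h.resolve_left hP.ne_top

/-- The inclusion `a ^ n S ⊆ R + a ^ (n + 1) S` for some `n`. It comes from the stabilization of the
images of `a ^ k S ∩ R` in `R ⧸ (a)`. -/
lemma exists_pow_mul_eq {R S : Type*} [CommRing R] [CommRing S] [Algebra R S] (a : R)
    [IsArtinianRing (R ⧸ Ideal.span {a})]
    (hreg : ∀ x : S, algebraMap R S a * x = 0 → x = 0)
    (hS : ∀ x : S, ∃ (m : ℕ) (r : R), algebraMap R S a ^ m * x = algebraMap R S r) :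
    ∃ n : ℕ, ∀ x : S, ∃ (r : R) (s : S),
      algebraMap R S a ^ n * x = algebraMap R S r + algebraMap R S a ^ (n + 1) * s := by
  set b := algebraMap R S a with hb
  let J : ℕ → Ideal R := fun k ↦ (Ideal.span {b ^ k}).comap (algebraMap R S)
  let f : ℕ →o (Ideal (R ⧸ Ideal.span {a}))ᵒᵈ :=
    ⟨fun k ↦ OrderDual.toDual ((J k).map (Ideal.Quotient.mk _)), fun i j hij ↦ by
      apply Ideal.map_mono
      apply Ideal.comap_mono
      rw [Ideal.span_singleton_le_span_singleton]
      exact pow_dvd_pow b hij⟩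
  obtain ⟨n, hn⟩ := IsArtinian.monotone_stabilizes f
  have step : ∀ m, n ≤ m → ∀ r ∈ J m, ∃ r₁ ∈ J (m + 1), ∃ r₂, r = r₁ + a * r₂ := by
    intro m hm r hr
    have h1 : (J m).map (Ideal.Quotient.mk (Ideal.span {a})) = (J (m + 1)).map _ :=
      (hn m hm).symm.trans (hn (m + 1) (by omega))
    have h2 := Ideal.mem_map_of_mem (Ideal.Quotient.mk (Ideal.span {a})) hr
    rw [h1, Ideal.mem_map_iff_of_surjective _ Ideal.Quotient.mk_surjective] at h2
    obtain ⟨r₁, hr₁, h3⟩ := h2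
    rw [eq_comm, Ideal.Quotient.eq, Ideal.mem_span_singleton] at h3
    obtain ⟨r₂, h4⟩ := h3
    exact ⟨r₁, hr₁, r₂, by rw [← h4]; ring⟩
  have descend : ∀ (d : ℕ) (x : S), (∃ (r : R) (s : S),
      b ^ (n + d) * x = algebraMap R S r + b ^ (n + d + 1) * s) →
      ∃ (r : R) (s : S), b ^ n * x = algebraMap R S r + b ^ (n + 1) * s := by
    intro d
    induction d with
    | zero => exact fun x h ↦ h
    | succ d ih =>
      rintro x ⟨r, s, h⟩
      apply ih
      obtain ⟨r₁, hr₁, r₂, rfl⟩ := step (n + (d + 1)) (by omega) r (by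
        rw [Ideal.mem_comap, Ideal.mem_span_singleton]
        exact ⟨x - b * s, by linear_combination -h⟩)
      rw [Ideal.mem_comap, Ideal.mem_span_singleton] at hr₁
      obtain ⟨s₁, hs₁⟩ := hr₁
      refine ⟨r₂, s₁ + s, ?_⟩
      rw [← sub_eq_zero]
      -- Both sides agree after multiplication by the regular element `b`.
      apply hreg
      rw [map_add, map_mul, hs₁, ← hb] at h
      linear_combination h
  refine ⟨n, fun x ↦ ?_⟩
  obtain ⟨m, r, h⟩ := hS x
  apply descend m x
  exact ⟨a ^ n * r, 0, by rw [map_mul, map_pow, ← h, ← hb]; ring⟩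

/-- Multiplication by `a ^ n` embeds `S ⧸ a S` in the image of `R ⧸ (a ^ (n + 1))` in
`S ⧸ a ^ (n + 1) S`, provided `a` is regular on `S` and `a ^ n S ⊆ R + a ^ (n + 1) S`. So `S ⧸ a S`
is already Artinian as an `R`-module. -/
lemma isArtinianRing_quotient_algebraMap {R S : Type*} [CommRing R] [CommRing S] [Algebra R S] (a : R) (n : ℕ)
    [IsArtinianRing (R ⧸ Ideal.span {a ^ (n + 1)})]
    (hreg : ∀ x : S, algebraMap R S a * x = 0 → x = 0)
    (hn : ∀ x : S, ∃ (r : R) (s : S),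
      algebraMap R S a ^ n * x = algebraMap R S r + algebraMap R S a ^ (n + 1) * s) :
    IsArtinianRing (S ⧸ Ideal.span {algebraMap R S a}) := by
  set b := algebraMap R S a with hb
  have hregn : ∀ (k : ℕ) (x : S), b ^ k * x = 0 → x = 0 := by
    intro k
    induction k with
    | zero => intro x h; simpa using h
    | succ k ih => intro x h; exact hreg _ (ih _ (by rw [← h]; ring))
  have hAR : IsArtinian R (R ⧸ Ideal.span {a ^ (n + 1)}) := by
    let σ := Ideal.Quotient.mk (Ideal.span {a ^ (n + 1)})
    have : RingHomSurjective σ := ⟨Ideal.Quotient.mk_surjective⟩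
    let l : (R ⧸ Ideal.span {a ^ (n + 1)}) →ₛₗ[σ] (R ⧸ Ideal.span {a ^ (n + 1)}) :=
      { toFun := id
        map_add' := fun _ _ ↦ rfl
        map_smul' := fun r x ↦ by
          rw [smul_eq_mul]
          exact Algebra.smul_def r x }
    exact (LinearMap.isArtinian_iff_of_bijective l Function.bijective_id).mpr inferInstance
  let g : R →ₗ[R] (S ⧸ Ideal.span {b ^ (n + 1)}) := Algebra.linearMap R _
  let g' : (R ⧸ Ideal.span {a ^ (n + 1)}) →ₗ[R] (S ⧸ Ideal.span {b ^ (n + 1)}) :=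
    Submodule.liftQ _ g (by
      rw [Submodule.span_singleton_le_iff_mem, LinearMap.mem_ker]
      change Ideal.Quotient.mk _ (algebraMap R S (a ^ (n + 1))) = 0
      rw [Ideal.Quotient.eq_zero_iff_mem, map_pow]
      exact Ideal.mem_span_singleton_self _)
  let ψ : (S ⧸ Ideal.span {b}) →ₗ[S] (S ⧸ Ideal.span {b ^ (n + 1)}) :=
    Submodule.mapQ _ _ (LinearMap.mulLeft S (b ^ n)) (by
      rw [Submodule.span_singleton_le_iff_mem, Submodule.mem_comap, LinearMap.mulLeft_apply,
        ← pow_succ]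
      exact Ideal.mem_span_singleton_self _)
  have hψ : ∀ x : S, ψ (Ideal.Quotient.mk _ x) = Ideal.Quotient.mk _ (b ^ n * x) := fun _ ↦ rfl
  have hinj : Function.Injective ψ := by
    rw [injective_iff_map_eq_zero]
    intro y hy
    obtain ⟨x, rfl⟩ := Ideal.Quotient.mk_surjective y
    rw [hψ, Ideal.Quotient.eq_zero_iff_mem, Ideal.mem_span_singleton] at hy
    obtain ⟨s, hs⟩ := hy
    rw [Ideal.Quotient.eq_zero_iff_mem, Ideal.mem_span_singleton]
    refine ⟨s, ?_⟩
    rw [← sub_eq_zero]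
    apply hregn n
    linear_combination hs
  have hrange : ∀ y, ψ.restrictScalars R y ∈ LinearMap.range g' := by
    intro y
    obtain ⟨x, rfl⟩ := Ideal.Quotient.mk_surjective y
    obtain ⟨r, s, h⟩ := hn x
    refine ⟨Ideal.Quotient.mk _ r, ?_⟩
    change Ideal.Quotient.mk _ (algebraMap R S r) = Ideal.Quotient.mk _ (b ^ n * x)
    rw [eq_comm, Ideal.Quotient.eq, Ideal.mem_span_singleton]
    exact ⟨s, by rw [h]; ring⟩
  have : IsArtinian R (LinearMap.range g') :=
    isArtinian_of_surjective _ g'.rangeRestrict g'.surjective_rangeRestrict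
  have : IsArtinian R (S ⧸ Ideal.span {b}) :=
    isArtinian_of_injective ((ψ.restrictScalars R).codRestrict _ hrange)
      (fun x y h ↦ hinj (congrArg Subtype.val h))
  exact isArtinian_of_tower R inferInstance

/-- If `b` lies in every maximal ideal of `S` and `S ⧸ (b)` is Artinian, then the maximal ideals of
`S` are finitely many, since they correspond to those of `S ⧸ (b)`, and finitely generated. -/
lemma semilocal_and_fg_of_isArtinianRing_quotient {S : Type*} [CommRing S] (b : S)
    [IsArtinianRing (S ⧸ Ideal.span {b})]
    (hle : ∀ N : Ideal S, N.IsMaximal → Ideal.span {b} ≤ N) :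
    IsSemilocalRing S ∧ ∀ N : Ideal S, N.IsMaximal → N.FG := by
  have hsurj : Function.Surjective (Ideal.Quotient.mk (Ideal.span {b})) :=
    Ideal.Quotient.mk_surjective
  constructor
  · have hfin : {I : Ideal (S ⧸ Ideal.span {b}) | I.IsMaximal}.Finite :=
      IsArtinianRing.setOfPred_isMaximal_finite _
    refine (hfin.image (Ideal.comap (Ideal.Quotient.mk _))).subset ?_
    intro N hN
    have hcomap := Ideal.comap_map_mk (hle N hN)
    refine ⟨N.map (Ideal.Quotient.mk _), ?_, hcomap⟩
    refine (Ideal.map_eq_top_or_isMaximal_of_surjective _ hsurj hN).resolve_left fun htop ↦ ?_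
    rw [htop, Ideal.comap_top] at hcomap
    exact hN.ne_top hcomap.symm
  · intro N hN
    refine Ideal.fg_of_fg_map_of_fg_inf_ker_of_surjective
      (f := Ideal.Quotient.mk (Ideal.span {b})) (IsNoetherian.noetherian _) ?_ hsurj
    rw [Ideal.mk_ker, inf_eq_right.mpr (hle N hN)]
    exact Submodule.fg_span_singleton b

/-- Elements of the Nagata transform of `I` are carried into `R` by a power of any given
element of `I`. -/
lemma exists_pow_mul_of_mem_nagataTransform {R : Type*} [CommRing R] {I : Ideal R} {a : R}
    (ha : a ∈ I) {q : Localization R⁰} (hq : q ∈ nagataTransform R I) :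
    ∃ (m : ℕ) (r : R), algebraMap R (Localization R⁰) a ^ m * q = algebraMap R _ r := by
  unfold nagataTransform at hq
  induction hq using Algebra.adjoin_induction with
  | mem x hx =>
    obtain ⟨k, hk⟩ := Set.mem_iUnion.mp hx
    have h := Submodule.mem_div_iff_forall_mul_mem.mp hk
      (algebraMap R (Localization R⁰) (a ^ (k + 1)))
      ((IsLocalization.mem_coeSubmodule _ _).mpr ⟨_, Ideal.pow_mem_pow ha _, rfl⟩)
    obtain ⟨r, hr⟩ := Submodule.mem_one.mp h
    exact ⟨k + 1, r, by rw [hr, map_pow, mul_comm]⟩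
  | algebraMap r => exact ⟨0, r, by simp⟩
  | add x y _ _ hx hy =>
    obtain ⟨m, r, h⟩ := hx
    obtain ⟨m', r', h'⟩ := hy
    refine ⟨m + m', a ^ m' * r + a ^ m * r', ?_⟩
    rw [map_add, map_mul, map_mul, ← h, ← h', map_pow, map_pow]
    ring
  | mul x y _ _ hx hy =>
    obtain ⟨m, r, h⟩ := hx
    obtain ⟨m', r', h'⟩ := hy
    refine ⟨m + m', r * r', ?_⟩
    rw [map_mul, ← h, ← h']
    ring

/-- Let `R` be a local ring with finitely generated regular maximal ideal `M` that is the
radical of a principal ideal.  If `S` is a ring with `R ⊆ S ⊆ T(M)` integral over `R`,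
then `S` is semilocal and every maximal ideal of `S` is finitely generated. -/
theorem krull_akizuki_analogue {R : Type*} [CommRing R] [IsLocalRing R]
    (hfg : (IsLocalRing.maximalIdeal R).FG)
    (hreg : ∃ r ∈ IsLocalRing.maximalIdeal R, r ∈ R⁰)
    (hrad : ∃ a : R, IsLocalRing.maximalIdeal R = (Ideal.span {a}).radical)
    (S : Subalgebra R (Localization R⁰))
    (hS : S ≤ nagataTransform R (IsLocalRing.maximalIdeal R))
    (hint : Algebra.IsIntegral R S) :
    IsSemilocalRing S ∧ ∀ N : Ideal S, N.IsMaximal → N.FG := by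
  obtain ⟨a, ha⟩ := hrad
  obtain ⟨r, hrM, hr⟩ := hreg
  have haM : a ∈ IsLocalRing.maximalIdeal R := by
    rw [ha]
    exact Ideal.le_radical (Ideal.mem_span_singleton_self a)
  have hareg : a ∈ R⁰ := by
    rw [ha] at hrM
    obtain ⟨k, hk⟩ := hrM
    obtain ⟨c, hc⟩ := Ideal.mem_span_singleton.mp hk
    have := pow_mem hr k
    rw [hc] at this
    exact (mul_mem_nonZeroDivisors.mp this).1
  have hSreg : ∀ x : S, algebraMap R S a * x = 0 → x = 0 := by
    intro x hx
    have hu : IsUnit (algebraMap R (Localization R⁰) a) :=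
      IsLocalization.map_units (Localization R⁰) (⟨a, hareg⟩ : R⁰)
    exact Subtype.ext (hu.mul_right_eq_zero.mp (congrArg Subtype.val hx))
  have hSpow : ∀ x : S, ∃ (m : ℕ) (r : R), algebraMap R S a ^ m * x = algebraMap R S r := by
    intro x
    obtain ⟨m, r, h⟩ := exists_pow_mul_of_mem_nagataTransform haM (hS x.2)
    exact ⟨m, r, Subtype.ext h⟩
  have : IsArtinianRing (R ⧸ Ideal.span {a}) := by
    have h := isArtinianRing_quotient hfg a ha 1
    rwa [pow_one] at h
  obtain ⟨n, hn⟩ := exists_pow_mul_eq a hSreg hSpow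
  have := isArtinianRing_quotient hfg a ha (n + 1)
  have : IsArtinianRing (S ⧸ Ideal.span {algebraMap R S a}) :=
    isArtinianRing_quotient_algebraMap a n hSreg hn
  have hle : ∀ N : Ideal S, N.IsMaximal → Ideal.span {algebraMap R S a} ≤ N := by
    intro N hN
    have hmax : (N.comap (algebraMap R S)).IsMaximal :=
      Ideal.isMaximal_comap_of_isIntegral_of_isMaximal N
    rw [Ideal.span_singleton_le_iff_mem, ← Ideal.mem_comap, IsLocalRing.eq_maximalIdeal hmax]
    exact haM
  exact semilocal_and_fg_of_isArtinianRing_quotient _ hle
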